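/- Let n ≥ 7 and let n+1 ≤ k ≤ 2n−1. Then every transitive homomorphism ψ : B_n → Sym_k is cyclic, i.e. ψ(σ_1) = ψ(σ_2) = … = ψ(σ_{n−1}). -/

import Mathlib

/-- The braid relations on `n-1` generators; generator `i : Fin (n-1)` stands for the
Artin generator `σ_{i+1}` (so the indexing is 0-based). The relations are
`σ_i σ_j = σ_j σ_i` for `|i-j| ≥ 2` and `σ_i σ_j σ_i = σ_j σ_i σ_j` for `|i-j| = 1`. -/
def braidRels (n : ℕ) : Set (FreeGroup (Fin (n - 1))) :=
  { r | ∃ i j : Fin (n - 1), ((i : ℕ) + 2 ≤ (j : ℕ) ∨ (j : ℕ) + 2 ≤ (i : ℕ)) ∧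
      r = FreeGroup.of i * FreeGroup.of j * (FreeGroup.of j * FreeGroup.of i)⁻¹ } ∪
  { r | ∃ i j : Fin (n - 1), (j : ℕ) = (i : ℕ) + 1 ∧
      r = FreeGroup.of i * FreeGroup.of j * FreeGroup.of i *
          (FreeGroup.of j * FreeGroup.of i * FreeGroup.of j)⁻¹ }

/-- The braid group `B_n`, given by the Artin presentation. -/
abbrev BraidGroup (n : ℕ) := PresentedGroup (braidRels n)

/-- The Artin generator `σ_{i+1}` of the braid group `B_n`, for `i : Fin (n-1)`. -/
def σ {n : ℕ} (i : Fin (n - 1)) : BraidGroup n := PresentedGroup.of i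

/-- A homomorphism to the symmetric group `Sym_k = Perm (Fin k)` is transitive if its
image acts transitively on the `k` points. -/
def IsTransitiveHom {G : Type*} [Group G] {k : ℕ} (φ : G →* Equiv.Perm (Fin k)) : Prop :=
  ∀ x y : Fin k, ∃ g : G, φ g x = y

/-- A homomorphism from `B_n` is cyclic if it sends all the generators `σ_1, …, σ_{n-1}`
to a single element. -/
def IsCyclicHom {n : ℕ} {H : Type*} [Group H] (ψ : BraidGroup n →* H) : Prop :=
  ∀ i j : Fin (n - 1), ψ (σ i) = ψ (σ j)

/-!
The rigidity behind everything is Artin's: for `g ≥ 4` every homomorphism `B_{g + 1} → Sym_g` is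
cyclic. The generators commuting with a permutation `a` act on the cycles of `a`; if there are few
cycles, this action is cyclic by induction, so that quotients of generators preserve each cycle of
`a`. Permutations which commute with `a` and preserve its cycles commute with each other, and
commuting generators satisfying a braid relation are equal.

Now let `ψ : B_n → Sym_k` be transitive and not cyclic, where `n < k < 2n`. Applied to the points of
a given period of `ψ σ_1`, the same argument shows that if these form few cycles, then
`ψ σ_3, ψ σ_4, …` agree on them. As this cannot happen on all points, `ψ σ_1` has either many fixed
points or many 2-cycles, and transitivity forces the exceptional points of `ψ σ_i` and `ψ σ_j` to be
disjoint whenever `|i - j| ≥ 2`. If there are many fixed points, the supports of the `ψ σ_i` form a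
chain in which consecutive members overlap in exactly half their size, so that `n ∣ k`. If there
are many 2-cycles, the at most three exceptional points turn out not to exist, all `ψ σ_i` are
involutions, and `ψ` factors through `Sym_n`. A subgroup of `Sym_n` of index less than `2n` contains
the alternating group or fixes a point, which again gives `n ∣ k`, or `k ≤ 2`.
-/

section

open Equiv Equiv.Perm MulAction

section BraidFamily

variable {G H : Type*} [Group G] [Group H] {g : ℕ} {s : ℕ → G}

/-- The terms `s 0, …, s (g - 1)` satisfy Artin's braid relations, i.e. they are the images of the
generators under a homomorphism from `B_{g + 1}`. Nothing is required of the other terms. -/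
structure IsBraidFamily (g : ℕ) (s : ℕ → G) : Prop where
  commute : ∀ {i j : ℕ}, i + 2 ≤ j → j < g → Commute (s i) (s j)
  braid : ∀ {i : ℕ}, i + 1 < g → s i * s (i + 1) * s i = s (i + 1) * s i * s (i + 1)

/-- The terms `s 0, …, s (g - 1)` are all equal: the conclusion of the rigidity theorems. -/
def ConstantBelow {α : Type*} (g : ℕ) (s : ℕ → α) : Prop :=
  ∀ ⦃i⦄, i < g → ∀ ⦃j⦄, j < g → s i = s j

theorem eq_of_braid_of_commute {a b : G} (h : a * b * a = b * a * b) (hab : Commute a b) :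
    a = b :=
  mul_left_cancel (h.trans (by rw [hab.eq]))

theorem eq_of_braid_of_commute_mul_inv {a b d : G} (h : a * b * a = b * a * b)
    (had : Commute a d) (hbd : Commute b d) (hc : Commute (a * d⁻¹) (b * d⁻¹)) : a = b := by
  refine eq_of_braid_of_commute h ?_
  have hd : Commute (a * d⁻¹) d := had.mul_left (Commute.refl d).inv_left
  rw [← inv_mul_cancel_right a d, ← inv_mul_cancel_right b d]
  exact (hc.mul_right hd).mul_left
    ((hbd.symm.mul_right (Commute.refl d).inv_right).mul_right (Commute.refl d))

namespace IsBraidFamily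

theorem map (hs : IsBraidFamily g s) (f : G →* H) : IsBraidFamily g (fun i ↦ f (s i)) where
  commute hij hj := (hs.commute hij hj).map f
  braid hi := by simp only [← map_mul, hs.braid hi]

theorem exists_lift (hs : IsBraidFamily g s) {K : Subgroup G} (hK : ∀ i < g, s i ∈ K) :
    ∃ t : ℕ → K, IsBraidFamily g t ∧ ∀ i < g, (t i : G) = s i := by
  classical
  let t : ℕ → K := fun i ↦ if hi : i < g then ⟨s i, hK i hi⟩ else 1
  have ht : ∀ i < g, (t i : G) = s i := fun i hi ↦ by simp only [t, dif_pos hi]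
  refine ⟨t, ⟨fun {i j} hij hj ↦ Subtype.ext ?_, fun {i} hi ↦ Subtype.ext ?_⟩, ht⟩
  · simpa only [Subgroup.coe_mul, ht i (by lia), ht j hj] using (hs.commute hij hj).eq
  · simpa only [Subgroup.coe_mul, ht i (by lia), ht (i + 1) hi] using hs.braid hi

theorem mono (hs : IsBraidFamily g s) {m : ℕ} (hm : m ≤ g) : IsBraidFamily m s where
  commute hij hj := hs.commute hij (hj.trans_le hm)
  braid hi := hs.braid (hi.trans_le hm)

theorem shift (hs : IsBraidFamily g s) (d : ℕ) : IsBraidFamily (g - d) (fun i ↦ s (i + d)) where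
  commute hij hj := hs.commute (by lia) (by lia)
  braid {i} hi := by
    rw [add_right_comm i 1 d]
    exact hs.braid (by lia)

theorem succ_eq_of_eq (hs : IsBraidFamily g s) {i : ℕ} (hi : i + 2 < g) (h : s i = s (i + 1)) :
    s (i + 1) = s (i + 2) :=
  eq_of_braid_of_commute (hs.braid hi) (h ▸ hs.commute le_rfl (by lia))

theorem eq_of_succ_eq (hs : IsBraidFamily g s) {i : ℕ} (hi : i + 2 < g)
    (h : s (i + 1) = s (i + 2)) : s i = s (i + 1) :=
  eq_of_braid_of_commute (hs.braid (by lia)) (h ▸ hs.commute le_rfl (by lia))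

theorem constantBelow_of_eq_succ (hs : IsBraidFamily g s) {i : ℕ} (hi : i + 1 < g)
    (h : s i = s (i + 1)) : ConstantBelow g s := by
  have h01 : s 0 = s 1 := by
    induction i with
    | zero => exact h
    | succ i ih => exact ih (by lia) (hs.eq_of_succ_eq hi h)
  have eq_succ : ∀ j, j + 1 < g → s j = s (j + 1) := fun j hj ↦ by
    induction j with
    | zero => exact h01
    | succ j ih => exact hs.succ_eq_of_eq hj (ih (by lia))
  have eq_zero : ∀ j, j < g → s j = s 0 := fun j hj ↦ by
    induction j with
    | zero => rfl
    | succ j ih => rw [← eq_succ j hj, ih (by lia)]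
  exact fun j hj l hl ↦ (eq_zero j hj).trans (eq_zero l hl).symm

theorem constantBelow_of_eq (hs : IsBraidFamily g s) (hg : 4 ≤ g) {i j : ℕ} (hij : i < j)
    (hj : j < g) (h : s i = s j) : ConstantBelow g s := by
  obtain rfl | hij := Nat.eq_or_lt_of_le (Nat.succ_le_iff.2 hij)
  · exact hs.constantBelow_of_eq_succ hj h
  obtain hj' | hj' : j + 1 < g ∨ j + 1 = g := by lia
  · exact hs.constantBelow_of_eq_succ hj' <|
      eq_of_braid_of_commute (hs.braid hj') (h ▸ hs.commute (by lia) hj')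
  obtain _ | i := i
  · obtain ⟨j, rfl⟩ : ∃ l, j = l + 1 := ⟨j - 1, by lia⟩
    have h0j : Commute (s 0) (s j) := hs.commute (by lia) (by lia)
    exact hs.constantBelow_of_eq_succ hj <| eq_of_braid_of_commute (hs.braid hj) (h ▸ h0j.symm)
  · have hi : i + 1 < g := by lia
    exact hs.constantBelow_of_eq_succ hi <|
      eq_of_braid_of_commute (hs.braid hi) (h ▸ hs.commute (by lia) hj)

theorem semiconjBy_succ (hs : IsBraidFamily g s) {i : ℕ} (hi : i + 1 < g) :
    SemiconjBy (s i * s (i + 1)) (s i) (s (i + 1)) := by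
  rw [SemiconjBy, hs.braid hi, mul_assoc]

theorem exists_semiconjBy_pair (hs : IsBraidFamily g s) {i j : ℕ} (hij : i + 2 ≤ j) (hj : j < g) :
    ∃ x, SemiconjBy x (s 0) (s i) ∧ SemiconjBy x (s 2) (s j) := by
  induction i with
  | zero =>
    induction j, hij using Nat.le_induction with
    | base => exact ⟨1, .one_left _, .one_left _⟩
    | succ j hij ih =>
      obtain ⟨x, hx0, hx2⟩ := ih (by lia)
      exact ⟨s j * s (j + 1) * x,
        ((hs.commute hij (by lia)).symm.mul_left (hs.commute (by lia) hj).symm).mul_left hx0,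
        (hs.semiconjBy_succ hj).mul_left hx2⟩
  | succ i ih =>
    obtain ⟨x, hx0, hx2⟩ := ih (by lia)
    exact ⟨s i * s (i + 1) * x, (hs.semiconjBy_succ (by lia)).mul_left hx0,
      SemiconjBy.mul_left ((hs.commute (by lia) hj).mul_left (hs.commute hij hj)) hx2⟩

theorem isConj (hs : IsBraidFamily g s) {i : ℕ} (hi : i < g) : IsConj (s 0) (s i) := by
  induction i with
  | zero => exact IsConj.refl _
  | succ i ih => exact (ih (by lia)).trans ⟨toUnits _, hs.semiconjBy_succ hi⟩

theorem constantBelow_of_eq_one (hs : IsBraidFamily g s) (h : s 0 = 1) : ConstantBelow g s := by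
  have eq_one : ∀ j, j < g → s j = 1 := fun j hj ↦ isConj_one_right.1 (h ▸ hs.isConj hj)
  exact fun i hi j hj ↦ (eq_one i hi).trans (eq_one j hj).symm

end IsBraidFamily

end BraidFamily

section Cycles

variable {X : Type*} {a p q : Perm X}

theorem commute_of_forall_sameCycle (hap : Commute a p) (haq : Commute a q)
    (hp : ∀ x, a.SameCycle x (p x)) (hq : ∀ x, a.SameCycle x (q x)) : Commute p q := by
  ext x
  obtain ⟨m, hm⟩ := hp x
  obtain ⟨l, hl⟩ := hq x
  calc p (q x) = (a ^ l * p) x := by rw [← hl, ← Perm.mul_apply, (hap.zpow_left l).eq]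
    _ = (a ^ (l + m)) x := by rw [Perm.mul_apply, ← hm, ← Perm.mul_apply, zpow_add]
    _ = (a ^ (m + l)) x := by rw [add_comm]
    _ = (a ^ m * q) x := by rw [Perm.mul_apply, ← hl, ← Perm.mul_apply, zpow_add]
    _ = q (p x) := by rw [← hm, (haq.zpow_left m).eq, Perm.mul_apply]

theorem sameCycle_apply_of_commute (h : Commute a p) {x y : X} (hxy : a.SameCycle x y) :
    a.SameCycle (p x) (p y) := by
  have := hxy.conj (g := p)
  rwa [← h.eq, mul_inv_cancel_right] at this

/-- The cycles of a permutation, fixed points included. -/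
abbrev Cycles (a : Perm X) : Type _ := Quotient (SameCycle.setoid a)

instance (a : Perm X) : MulAction (Subgroup.centralizer {a}) (Cycles a) where
  smul p := Quotient.map (p : Perm X) fun _ _ ↦
    sameCycle_apply_of_commute (Subgroup.mem_centralizer_singleton_iff.1 p.2).symm
  one_smul := Quotient.ind fun _ ↦ rfl
  mul_smul _ _ := Quotient.ind fun _ ↦ rfl

theorem mul_card_cycles_le [Finite X] {c : ℕ} (h : ∀ x, c ≤ Function.minimalPeriod a x) :
    c * Nat.card (Cycles a) ≤ Nat.card X := by
  let f : Fin c × Cycles a → X := fun p ↦ a^[p.1] p.2.out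
  have hf_mk : ∀ p, Quotient.mk _ (f p) = p.2 := fun p ↦ by
    rw [← Quotient.out_eq p.2]
    exact Quotient.sound (SameCycle.symm ⟨p.1, by rw [zpow_natCast, ← iterate_eq_pow]⟩)
  have hf : Function.Injective f := by
    rintro ⟨m, ω⟩ ⟨l, τ⟩ heq
    obtain rfl : ω = τ := (hf_mk (m, ω)).symm.trans (heq ▸ hf_mk (l, τ))
    have : (m : ℕ) = l := Function.iterate_injOn_Iio_minimalPeriod
      (m.2.trans_le (h _)) (l.2.trans_le (h _)) heq
    rw [Fin.ext this]
  simpa using Nat.card_le_card_of_injective f hf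

theorem minimalPeriod_apply_of_semiconj {α β : Type*} {f : α → α} {f' : β → β} {h : α → β}
    (hf : Function.Semiconj h f f') (hh : Function.Injective h) (x : α) :
    Function.minimalPeriod f' (h x) = Function.minimalPeriod f x :=
  Function.minimalPeriod_eq_minimalPeriod_iff.2 fun n ↦
    ⟨fun hn ↦ hh (((hf.iterate_right n) x).trans hn), fun hn ↦ hn.map hf⟩

/-- The set of points whose period under `p` lies in `P`. -/
def periodSet (p : Perm X) (P : Set ℕ) : Set X := {x | Function.minimalPeriod p x ∈ P}

theorem apply_mem_periodSet_iff (h : SemiconjBy a p q) {P : Set ℕ} {x : X} :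
    a x ∈ periodSet q P ↔ x ∈ periodSet p P := by
  have semiconj : Function.Semiconj a p q := DFunLike.congr_fun h
  simp only [periodSet, Set.mem_ofPred_eq, minimalPeriod_apply_of_semiconj semiconj a.injective]

/-- Permutations commuting with `a` preserve each of its period sets. -/
def periodSubMulAction (a : Perm X) (P : Set ℕ) : SubMulAction (Subgroup.centralizer {a}) X where
  carrier := periodSet a P
  smul_mem' p _ :=
    (apply_mem_periodSet_iff (Subgroup.mem_centralizer_singleton_iff.1 p.2)).2

theorem ncard_periodSet_eq_of_isConj (h : IsConj p q) (P : Set ℕ) :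
    (periodSet p P).ncard = (periodSet q P).ncard := by
  obtain ⟨a, ha⟩ := h
  have himage : (a : Perm X) '' periodSet p P = periodSet q P := by
    ext x
    rw [Equiv.image_eq_preimage_symm, Set.mem_preimage, ← apply_mem_periodSet_iff ha,
      apply_symm_apply]
  rw [← himage, Set.ncard_image_of_injective _ (a : Perm X).injective]

theorem minimalPeriod_eq_of_eqOn {Z : Set X} (h : Set.EqOn p q Z) (hZ : Set.MapsTo p Z Z) {x : X}
    (hx : x ∈ Z) : Function.minimalPeriod p x = Function.minimalPeriod q x := by
  have restrict (r : Perm X) (hr : Set.EqOn p r Z) :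
      Function.minimalPeriod r x = Function.minimalPeriod (hZ.restrict p Z Z) ⟨x, hx⟩ :=
    minimalPeriod_apply_of_semiconj (h := ((↑) : Z → X)) (fun z ↦ hr z.2)
      Subtype.val_injective ⟨x, hx⟩
  rw [restrict p fun _ _ ↦ rfl, restrict q h]

theorem mem_periodSet_one {x : X} : x ∈ periodSet p {1} ↔ p x = x :=
  Function.minimalPeriod_eq_one_iff_isFixedPt

theorem coe_support_eq_periodSet [Fintype X] [DecidableEq X] :
    (p.support : Set X) = periodSet p {1}ᶜ := by
  ext x
  exact mem_support.trans mem_periodSet_one.not.symm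

end Cycles

section Rigidity

/-- Every braid family of length `g` in the symmetric group on `g` letters is constant, i.e. every
homomorphism from `B_{g + 1}` to `Sym_g` is cyclic. -/
def IsRigid (g : ℕ) : Prop :=
  ∀ s : ℕ → Perm (Fin g), IsBraidFamily g s → ConstantBelow g s

variable {X : Type*} [Finite X] {g : ℕ} {s : ℕ → Perm X} {a : Perm X}

theorem IsRigid.constantBelow (hg : IsRigid g) (hX : Nat.card X ≤ g) (hs : IsBraidFamily g s) :
    ConstantBelow g s := fun i hi j hj ↦ by
  let e : X ↪ Fin g := (Finite.equivFin X).toEmbedding.trans (Fin.castLEEmb hX)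
  exact Perm.viaEmbeddingHom_injective e (hg _ (hs.map (Perm.viaEmbeddingHom e)) hi hj)

theorem IsBraidFamily.constantBelow_of_card_cycles_le (hs : IsBraidFamily g s) (hg : 4 ≤ g)
    (hrigid : IsRigid g) (has : ∀ i < g, Commute a (s i)) (ha : Nat.card (Cycles a) ≤ g) :
    ConstantBelow g s := by
  obtain ⟨t, ht, hts⟩ := hs.exists_lift (K := Subgroup.centralizer {a}) fun i hi ↦
    Subgroup.mem_centralizer_singleton_iff.2 (has i hi).symm.eq
  have hconst := hrigid.constantBelow ha (ht.map (toPermHom _ (Cycles a)))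
  have sameCycle : ∀ i < g, ∀ x, a.SameCycle x ((s i * (s 3)⁻¹) x) := fun i hi x ↦ by
    have := DFunLike.congr_fun (hconst (i := 3) (by lia) hi) (Quotient.mk _ ((s 3)⁻¹ x))
    have : a.SameCycle ((t 3 : Perm X) ((s 3)⁻¹ x)) ((t i : Perm X) ((s 3)⁻¹ x)) :=
      Quotient.exact this
    rwa [hts 3 (by lia), hts i hi, ← Perm.mul_apply, mul_inv_cancel] at this
  have commute : ∀ i < g, Commute a (s i * (s 3)⁻¹) := fun i hi ↦
    (has i hi).mul_right (has 3 (by lia)).inv_right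
  exact hs.constantBelow_of_eq_succ (i := 0) (by lia) <| eq_of_braid_of_commute_mul_inv
    (hs.braid (by lia)) (hs.commute (by lia) (by lia)) (hs.commute (by lia) (by lia)) <|
    commute_of_forall_sameCycle (commute 0 (by lia)) (commute 1 (by lia))
      (sameCycle 0 (by lia)) (sameCycle 1 (by lia))

theorem IsBraidFamily.eqOn_periodSet (hs : IsBraidFamily g s) (hg : 4 ≤ g)
    (hrigid : IsRigid g) (has : ∀ i < g, Commute a (s i)) {c : ℕ} {P : Set ℕ}
    (hP : ∀ m ∈ P, 0 < m → c ≤ m) (hcard : (periodSet a P).ncard < c * (g + 1)) {i j : ℕ}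
    (hi : i < g) (hj : j < g) : Set.EqOn (s i) (s j) (periodSet a P) := fun x hx ↦ by
  obtain ⟨t, ht, hts⟩ := hs.exists_lift (K := Subgroup.centralizer {a}) fun i hi ↦
    Subgroup.mem_centralizer_singleton_iff.2 (has i hi).symm.eq
  let Z := periodSubMulAction a P
  let res := toPermHom (Subgroup.centralizer {a}) Z
  let a' : Subgroup.centralizer {a} := ⟨a, Subgroup.mem_centralizer_singleton_iff.2 rfl⟩
  have minimalPeriod_res : ∀ z : Z, c ≤ Function.minimalPeriod (res a') z := fun z ↦ by
    have hz : Function.minimalPeriod a z = Function.minimalPeriod (res a') z :=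
      minimalPeriod_apply_of_semiconj (h := ((↑) : Z → X)) (fun _ ↦ rfl) Subtype.val_injective z
    rw [← hz]
    exact hP _ z.2 (Function.minimalPeriod_pos_of_mem_periodicPts
      (Function.Injective.mem_periodicPts a.injective (z : X)))
  have hcycles : Nat.card (Cycles (res a')) ≤ g := by
    have := mul_card_cycles_le minimalPeriod_res
    exact Nat.lt_succ_iff.1 (Nat.lt_of_mul_lt_mul_left (this.trans_lt hcard))
  have hcommute : ∀ i < g, Commute a' (t i) := fun i hi ↦
    Subtype.ext (by simpa only [Subgroup.coe_mul, hts i hi] using (has i hi).eq)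
  have hconst := (ht.map res).constantBelow_of_card_cycles_le hg hrigid
    (fun i hi ↦ (hcommute i hi).map res) hcycles
  rw [← hts i hi, ← hts j hj]
  exact congrArg Subtype.val (DFunLike.congr_fun (hconst hi hj) ⟨x, hx⟩)

end Rigidity

section Artin

theorem eq_of_braid_of_commute_fin_four :
    ∀ a : Perm (Fin 4), a ≠ 1 → ∀ b, a * b = b * a → ∀ c, a * c = c * a →
      b * c * b = c * b * c → b = c := by
  decide +kernel

theorem eq_of_braid_of_commute_fin_five :
    ∀ a : Perm (Fin 5), 2 < a.support.card → ∀ b, a * b = b * a → ∀ c, a * c = c * a →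
      b * c * b = c * b * c → b = c := by
  decide +kernel

theorem eq_or_disjoint_of_commute_fin_five :
    ∀ a : Perm (Fin 5), a.support.card ≤ 2 → ∀ b : Perm (Fin 5), b.support.card ≤ 2 →
      a * b = b * a → a = b ∨ _root_.Disjoint a.support b.support := by
  decide +kernel

theorem isRigid_four : IsRigid 4 := fun s hs ↦ by
  by_cases h : s 0 = 1
  · exact hs.constantBelow_of_eq_one h
  · exact hs.constantBelow_of_eq_succ (i := 2) (by lia) <|
      eq_of_braid_of_commute_fin_four _ h _ (hs.commute (by lia) (by lia)) _
        (hs.commute (by lia) (by lia)) (hs.braid (by lia))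

theorem IsBraidFamily.card_support_eq {X : Type*} [Fintype X] [DecidableEq X] {g : ℕ}
    {s : ℕ → Perm X} (hs : IsBraidFamily g s) {i : ℕ} (hi : i < g) :
    (s i).support.card = (s 0).support.card := by
  rw [← Set.ncard_coe_finset, ← Set.ncard_coe_finset, coe_support_eq_periodSet,
    coe_support_eq_periodSet, ncard_periodSet_eq_of_isConj (hs.isConj hi)]

theorem isRigid_five : IsRigid 5 := fun s hs ↦ by
  obtain h | h := Nat.lt_or_ge 2 (s 0).support.card
  · exact hs.constantBelow_of_eq_succ (i := 2) (by lia) <|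
      eq_of_braid_of_commute_fin_five _ h _ (hs.commute (by lia) (by lia)) _
        (hs.commute (by lia) (by lia)) (hs.braid (by lia))
  by_contra hne
  have disjoint : ∀ i j, i + 2 ≤ j → j < 5 → _root_.Disjoint (s i).support (s j).support :=
    fun i j hij hj ↦ (eq_or_disjoint_of_commute_fin_five _ (by rwa [hs.card_support_eq (by lia)])
      _ (by rwa [hs.card_support_eq hj]) (hs.commute hij hj)).resolve_left
        fun heq ↦ hne (hs.constantBelow_of_eq (by lia) (by lia) hj heq)
  have hunion : ((s 0).support ∪ (s 2).support ∪ (s 4).support).card ≤ 5 :=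
    Finset.card_le_univ _
  rw [Finset.card_union_of_disjoint (Finset.disjoint_union_left.2
      ⟨disjoint 0 4 (by lia) (by lia), disjoint 2 4 (by lia) (by lia)⟩),
    Finset.card_union_of_disjoint (disjoint 0 2 (by lia) (by lia)),
    hs.card_support_eq (i := 2) (by lia), hs.card_support_eq (i := 4) (by lia)] at hunion
  exact hne (hs.constantBelow_of_eq_one (card_support_le_one.1 (by lia)))

variable {X : Type*} [Finite X] {g : ℕ} {s : ℕ → Perm X} {c : ℕ} {P : Set ℕ}

theorem IsBraidFamily.eqOn_periodSet_zero (hs : IsBraidFamily g s) (hg : 6 ≤ g)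
    (hrigid : IsRigid (g - 2)) (hP : ∀ m ∈ P, 0 < m → c ≤ m)
    (hcard : (periodSet (s 0) P).ncard < c * (g - 1)) {i j : ℕ} (hi2 : 2 ≤ i) (hi : i < g)
    (hj2 : 2 ≤ j) (hj : j < g) : Set.EqOn (s i) (s j) (periodSet (s 0) P) := by
  have := (hs.shift 2).eqOn_periodSet (a := s 0) (i := i - 2) (j := j - 2) (by lia) hrigid
    (fun l hl ↦ hs.commute (by lia) (by lia)) hP (by rwa [show g - 2 + 1 = g - 1 by lia])
    (by lia) (by lia)
  simpa only [Nat.sub_add_cancel hi2, Nat.sub_add_cancel hj2] using this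

theorem IsBraidFamily.eqOn_periodSet_last (hs : IsBraidFamily g s) (hg : 6 ≤ g)
    (hrigid : IsRigid (g - 2)) (hP : ∀ m ∈ P, 0 < m → c ≤ m)
    (hcard : (periodSet (s 0) P).ncard < c * (g - 1)) {i j : ℕ} (hi : i < g - 2)
    (hj : j < g - 2) : Set.EqOn (s i) (s j) (periodSet (s (g - 1)) P) := by
  refine (hs.mono (Nat.sub_le g 2)).eqOn_periodSet (by lia) hrigid
    (fun l hl ↦ (hs.commute (by lia) (by lia)).symm) hP ?_ hi hj
  rwa [← ncard_periodSet_eq_of_isConj (hs.isConj (by lia)), show g - 2 + 1 = g - 1 by lia]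

theorem isRigid_of_isRigid_sub_two (hg : 6 ≤ g) (hrigid : IsRigid (g - 2)) : IsRigid g :=
    fun s hs ↦ by
  have hsum : (periodSet (s 0) {1}).ncard + (periodSet (s 0) {1}ᶜ).ncard = g := by
    simpa using! Set.ncard_add_ncard_compl (periodSet (s 0) {1})
  obtain h | h := Nat.lt_or_ge (periodSet (s 0) {1}).ncard (1 * (g - 1))
  · have eqOn := fun {c P} hP hcard ↦ hs.eqOn_periodSet_zero (c := c) (P := P) hg hrigid hP hcard
      (i := 2) (j := 3) (by lia) (by lia) (by lia) (by lia)
    refine hs.constantBelow_of_eq_succ (i := 2) (by lia) (Equiv.ext fun x ↦ ?_)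
    by_cases hx : x ∈ periodSet (s 0) {1}
    · exact eqOn (by simp) h hx
    · exact eqOn (c := 2) (P := {1}ᶜ) (fun m (hm : m ≠ 1) hm0 ↦ by lia) (by lia) hx
  · rw [← coe_support_eq_periodSet, Set.ncard_coe_finset] at hsum
    exact hs.constantBelow_of_eq_one (card_support_le_one.1 (by lia))

theorem isRigid_of_four_le (hg : 4 ≤ g) : IsRigid g := by
  induction g using Nat.strong_induction_on with
  | _ g ih =>
    obtain rfl | rfl | hg : g = 4 ∨ g = 5 ∨ 6 ≤ g := by lia
    · exact isRigid_four
    · exact isRigid_five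
    · exact isRigid_of_isRigid_sub_two hg (ih _ (by lia) (by lia))

end Artin

section Transitive

/-- No proper nonempty subset is stable under `s 0, …, s (g - 1)`; for permutations of a finite
type this says that the group they generate is transitive. -/
def IsTransitiveBelow {X : Type*} (g : ℕ) (s : ℕ → Perm X) : Prop :=
  ∀ Z : Set X, Z.Nonempty → (∀ i < g, Set.MapsTo (s i) Z Z) → Z = Set.univ

variable {X : Type*} [Finite X] {g : ℕ} {s : ℕ → Perm X} {c : ℕ} {P : Set ℕ}

theorem IsBraidFamily.constantBelow_or_le_ncard_periodSet (hs : IsBraidFamily g s) (hg : 6 ≤ g)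
    (hX : Nat.card X ≤ 2 * g + 1) :
    ConstantBelow g s ∨ g - 1 ≤ (periodSet (s 0) {1}).ncard ∨
      2 * (g - 1) ≤ (periodSet (s 0) {2}).ncard := by
  have hrigid : IsRigid (g - 2) := isRigid_of_four_le (by lia)
  by_contra! ⟨hne, h1, h2⟩
  have h3 : (periodSet (s 0) {1, 2}ᶜ).ncard < 3 * (g - 1) :=
    (Set.ncard_le_card _).trans_lt (by lia)
  have eqOn := fun {c P} hP hcard ↦ hs.eqOn_periodSet_zero (c := c) (P := P) hg hrigid hP hcard
    (i := 2) (j := 3) (by lia) (by lia) (by lia) (by lia)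
  refine hne (hs.constantBelow_of_eq_succ (i := 2) (by lia) (Equiv.ext fun x ↦ ?_))
  by_cases hx1 : x ∈ periodSet (s 0) {1}
  · exact eqOn (c := 1) (by simp) (by lia) hx1
  by_cases hx2 : x ∈ periodSet (s 0) {2}
  · exact eqOn (by simp) h2 hx2
  · refine eqOn (fun m hm hm0 ↦ ?_) h3 (not_or.2 ⟨hx1, hx2⟩)
    have : m ≠ 1 ∧ m ≠ 2 := not_or.1 hm
    lia

theorem IsBraidFamily.constantBelow_or_disjoint_periodSet (hs : IsBraidFamily g s)
    (ht : IsTransitiveBelow g s) (hg : 6 ≤ g) (hP : ∀ m ∈ P, 0 < m → c ≤ m)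
    (hcard : (periodSet (s 0) P).ncard < c * (g - 1)) :
    ConstantBelow g s ∨
      ∀ i j, i + 2 ≤ j → j < g → _root_.Disjoint (periodSet (s i) P) (periodSet (s j) P) := by
  have hrigid : IsRigid (g - 2) := isRigid_of_four_le (by lia)
  let W := periodSet (s 0) P ∩ periodSet (s 2) P
  obtain hW | hW := Set.eq_empty_or_nonempty W
  · refine .inr fun i j hij hj ↦ Set.disjoint_left.2 fun x hxi hxj ↦ ?_
    obtain ⟨a, hai, haj⟩ := hs.exists_semiconjBy_pair hij hj
    obtain ⟨y, rfl⟩ := a.surjective x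
    exact hW.le ⟨(apply_mem_periodSet_iff hai).1 hxi, (apply_mem_periodSet_iff haj).1 hxj⟩
  have h02 : Commute (s 0) (s 2) := hs.commute (by lia) (by lia)
  have hmaps : Set.MapsTo (s 0) W W := fun x hx ↦
    ⟨(apply_mem_periodSet_iff (Commute.refl _)).2 hx.1, (apply_mem_periodSet_iff h02).2 hx.2⟩
  have mem_last : W ⊆ periodSet (s (g - 1)) P := fun x hx ↦ by
    have heqOn := hs.eqOn_periodSet_zero hg hrigid hP hcard le_rfl (by lia : 2 < g)
      (by lia : 2 ≤ g - 1) (by lia)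
    have := minimalPeriod_eq_of_eqOn heqOn
      (fun _ ↦ (apply_mem_periodSet_iff h02.symm).2) hx.1
    rw [periodSet, Set.mem_ofPred_eq, ← this]
    exact hx.2
  have eqOn_zero : ∀ i < g, Set.EqOn (s i) (s 0) W := fun i hi x hx ↦ by
    have last := fun {i} (hi : i < g - 2) ↦ hs.eqOn_periodSet_last hg hrigid hP hcard hi
      (by lia : 0 < g - 2) (mem_last hx)
    obtain hi' | hi' := Nat.lt_or_ge i (g - 2)
    · exact last hi'
    · exact (hs.eqOn_periodSet_zero hg hrigid hP hcard (by lia) hi le_rfl (by lia) hx.1).trans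
        (last (by lia))
  have hWuniv : W = Set.univ := ht W hW fun i hi ↦ hmaps.congr (eqOn_zero i hi).symm
  refine .inl fun i hi j hj ↦ Equiv.ext fun x ↦ ?_
  have hx : x ∈ W := hWuniv ▸ Set.mem_univ x
  exact (eqOn_zero i hi hx).trans (eqOn_zero j hj hx).symm

end Transitive

section Coxeter

open scoped Nat

variable {G : Type*} [Group G] {g : ℕ} {s : ℕ → G}

/-- The product `s i * s (i + 1) * ⋯ * s (i + l - 1)`. For the adjacent transpositions these
products represent the cosets of one symmetric group in the next. -/
def consecutiveProd (s : ℕ → G) (i l : ℕ) : G := ((List.range' i l).map s).prod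

theorem consecutiveProd_zero (s : ℕ → G) (i : ℕ) : consecutiveProd s i 0 = 1 := rfl

theorem consecutiveProd_succ (s : ℕ → G) (i l : ℕ) :
    consecutiveProd s i (l + 1) = s i * consecutiveProd s (i + 1) l := by
  rw [consecutiveProd, List.range'_succ, List.map_cons, List.prod_cons, consecutiveProd]

namespace IsBraidFamily

theorem commute_consecutiveProd (hs : IsBraidFamily g s) {k i l : ℕ} (hki : k + 2 ≤ i)
    (hl : i + l ≤ g) : Commute (s k) (consecutiveProd s i l) := by
  induction l generalizing i with
  | zero => exact Commute.one_right _
  | succ l ih =>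
    rw [consecutiveProd_succ]
    exact (hs.commute hki (by lia)).mul_right (ih (by lia) (by lia))

theorem semiconjBy_consecutiveProd (hs : IsBraidFamily g s) {k i l : ℕ} (hik : i ≤ k)
    (hkl : k + 1 < i + l) (hl : i + l ≤ g) :
    SemiconjBy (consecutiveProd s i l) (s k) (s (k + 1)) := by
  induction l generalizing i with
  | zero => lia
  | succ l ih =>
    rw [consecutiveProd_succ]
    obtain rfl | hik := hik.eq_or_lt
    · obtain ⟨l, rfl⟩ : ∃ l', l = l' + 1 := ⟨l - 1, by lia⟩
      rw [consecutiveProd_succ, ← mul_assoc]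
      exact (hs.semiconjBy_succ (by lia)).mul_left
        (hs.commute_consecutiveProd (by lia) (by lia)).symm
    · exact SemiconjBy.mul_left (hs.commute (by lia) (by lia)) (ih hik (by lia) (by lia))

theorem mul_consecutiveProd_eq {m : ℕ} (hs : IsBraidFamily (m + 1) s)
    (hsq : ∀ i < m + 1, s i * s i = 1) {k i l : ℕ} (hk : k < m + 1) (hil : i + l = m + 1) :
    ∃ i' l', i' + l' = m + 1 ∧ ∃ h ∈ Subgroup.closure (s '' Set.Iio m),
      s k * consecutiveProd s i l = consecutiveProd s i' l' * h := by
  have mem_closure : ∀ j < m, s j ∈ Subgroup.closure (s '' Set.Iio m) := fun j hj ↦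
    Subgroup.subset_closure (Set.mem_image_of_mem s hj)
  obtain hki | rfl | rfl | hik : k + 2 ≤ i ∨ i = k + 1 ∨ i = k ∨ i < k := by lia
  · exact ⟨i, l, hil, s k, mem_closure k (by lia), (hs.commute_consecutiveProd hki (by lia)).eq⟩
  · refine ⟨k, l + 1, by lia, 1, one_mem _, ?_⟩
    rw [consecutiveProd_succ, mul_one]
  · obtain ⟨l, rfl⟩ : ∃ l', l = l' + 1 := ⟨l - 1, by lia⟩
    refine ⟨i + 1, l, by lia, 1, one_mem _, ?_⟩
    rw [consecutiveProd_succ, ← mul_assoc, hsq i hk, one_mul, mul_one]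
  · obtain ⟨k, rfl⟩ : ∃ k', k = k' + 1 := ⟨k - 1, by lia⟩
    exact ⟨i, l, hil, s k, mem_closure k (by lia),
      (hs.semiconjBy_consecutiveProd (by lia) (by lia) (by lia)).eq.symm⟩

theorem exists_eq_consecutiveProd_mul {m : ℕ} (hs : IsBraidFamily (m + 1) s)
    (hsq : ∀ i < m + 1, s i * s i = 1) {x : G}
    (hx : x ∈ Subgroup.closure (s '' Set.Iio (m + 1))) :
    ∃ i l, i + l = m + 1 ∧ ∃ h ∈ Subgroup.closure (s '' Set.Iio m),
      x = consecutiveProd s i l * h := by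
  have mul_left : ∀ k < m + 1, ∀ y,
      (∃ i l, i + l = m + 1 ∧ ∃ h ∈ Subgroup.closure (s '' Set.Iio m),
        y = consecutiveProd s i l * h) →
      ∃ i l, i + l = m + 1 ∧ ∃ h ∈ Subgroup.closure (s '' Set.Iio m),
        s k * y = consecutiveProd s i l * h := by
    rintro k hk _ ⟨i, l, hil, h, hh, rfl⟩
    obtain ⟨i', l', hil', h', hh', heq⟩ := hs.mul_consecutiveProd_eq hsq hk hil
    exact ⟨i', l', hil', h' * h, mul_mem hh' hh, by rw [← mul_assoc, heq, mul_assoc]⟩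
  induction hx using Subgroup.closure_induction_left with
  | one => exact ⟨m + 1, 0, by lia, 1, one_mem _, by rw [consecutiveProd_zero, mul_one]⟩
  | mul_left x hx y _ ih =>
    obtain ⟨k, hk, rfl⟩ := hx
    exact mul_left k hk y ih
  | inv_mul_cancel x hx y _ ih =>
    obtain ⟨k, hk, rfl⟩ := hx
    rw [inv_eq_of_mul_eq_one_left (hsq k hk)]
    exact mul_left k hk y ih

theorem finite_closure_and_card_le_factorial (hs : IsBraidFamily g s)
    (hsq : ∀ i < g, s i * s i = 1) :
    Finite (Subgroup.closure (s '' Set.Iio g)) ∧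
      Nat.card (Subgroup.closure (s '' Set.Iio g)) ≤ (g + 1)! := by
  induction g with
  | zero =>
    have hbot : Subgroup.closure (s '' Set.Iio 0) = ⊥ := by simp
    rw [hbot]
    exact ⟨inferInstance, by simp⟩
  | succ m ih =>
    obtain ⟨hfin, hcard⟩ := ih (hs.mono m.le_succ) fun i hi ↦ hsq i (by lia)
    let f : Fin (m + 2) × Subgroup.closure (s '' Set.Iio m) → G := fun p ↦
      consecutiveProd s p.1 (m + 1 - p.1) * p.2
    have hsub : (Subgroup.closure (s '' Set.Iio (m + 1)) : Set G) ⊆ Set.range f := fun x hx ↦ by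
      obtain ⟨i, l, hil, h, hh, rfl⟩ := hs.exists_eq_consecutiveProd_mul hsq hx
      obtain rfl : l = m + 1 - i := by lia
      exact ⟨(⟨i, by lia⟩, ⟨h, hh⟩), rfl⟩
    refine ⟨(Set.finite_range f).subset hsub, ?_⟩
    calc Nat.card (Subgroup.closure (s '' Set.Iio (m + 1)))
      _ ≤ Nat.card (Set.range f) := Nat.card_mono (Set.finite_range f) hsub
      _ ≤ Nat.card (Fin (m + 2) × Subgroup.closure (s '' Set.Iio m)) := Finite.card_range_le f
      _ ≤ (m + 2) * (m + 1)! := by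
        rw [Nat.card_prod, Nat.card_fin]
        exact Nat.mul_le_mul_left _ hcard

theorem prodMk {H : Type*} [Group H] {t : ℕ → H} (hs : IsBraidFamily g s)
    (ht : IsBraidFamily g t) : IsBraidFamily g (fun i ↦ (s i, t i)) where
  commute hij hj := (hs.commute hij hj).prod (ht.commute hij hj)
  braid hi := Prod.ext (hs.braid hi) (ht.braid hi)

end IsBraidFamily

theorem swap_braid {α : Type*} [DecidableEq α] {a b c : α} (hab : a ≠ b) (hbc : b ≠ c)
    (hac : a ≠ c) : swap a b * swap b c * swap a b = swap b c * swap a b * swap b c := by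
  rw [swap_mul_swap_mul_swap hab hac, swap_comm a b, swap_comm b c,
    swap_mul_swap_mul_swap hbc.symm hac.symm, swap_comm]

/-- The transposition of `i` and `i + 1` in the symmetric group on `{0, …, g}`, continued by `1`
to all indices `i`. -/
def adjacentSwap (g i : ℕ) : Perm (Fin (g + 1)) :=
  if hi : i < g then swap ⟨i, by lia⟩ ⟨i + 1, by lia⟩ else 1

theorem adjacentSwap_of_lt {i : ℕ} (hi : i < g) :
    adjacentSwap g i = swap ⟨i, by lia⟩ ⟨i + 1, by lia⟩ :=
  dif_pos hi

theorem isBraidFamily_adjacentSwap (g : ℕ) : IsBraidFamily g (adjacentSwap g) where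
  commute {i j} hij hj := by
    rw [adjacentSwap_of_lt (by lia : i < g), adjacentSwap_of_lt hj]
    refine (disjoint_swap_swap ?_).commute
    simp only [List.nodup_cons, List.mem_cons, List.not_mem_nil, List.nodup_nil, Fin.mk.injEq]
    lia
  braid {i} hi := by
    rw [adjacentSwap_of_lt (by lia : i < g), adjacentSwap_of_lt hi,
      swap_braid (Fin.ne_of_val_ne (by lia)) (Fin.ne_of_val_ne (by lia))
        (Fin.ne_of_val_ne (by lia))]

theorem IsBraidFamily.exists_monoidHom_perm (hs : IsBraidFamily g s)
    (hsq : ∀ i < g, s i * s i = 1) :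
    ∃ ρ : Perm (Fin (g + 1)) →* G, ∀ i : Fin g, ρ (swap i.castSucc i.succ) = s i := by
  let t : ℕ → G × Perm (Fin (g + 1)) := fun i ↦ (s i, adjacentSwap g i)
  let Γ := Subgroup.closure (t '' Set.Iio g)
  obtain ⟨hfin, hcard⟩ : Finite Γ ∧ Nat.card Γ ≤ (g + 1)! :=
    (hs.prodMk (isBraidFamily_adjacentSwap g)).finite_closure_and_card_le_factorial
      fun i hi ↦ Prod.ext (hsq i hi) (by simp [adjacentSwap_of_lt hi])
  let x : Fin g → Γ := fun i ↦ ⟨t i, Subgroup.subset_closure (Set.mem_image_of_mem t i.2)⟩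
  let π : Γ →* Perm (Fin (g + 1)) := (MonoidHom.snd _ _).comp Γ.subtype
  have hπx : ∀ i, π (x i) = swap i.castSucc i.succ := fun i ↦ adjacentSwap_of_lt i.2
  have hsurj : Function.Surjective π := by
    rw [← MonoidHom.mrange_eq_top, eq_top_iff, ← mclosure_swap_castSucc_succ,
      Submonoid.closure_le]
    rintro _ ⟨i, rfl⟩
    exact ⟨x i, hπx i⟩
  have hbij : Function.Bijective π := hsurj.bijective_of_nat_card_le <| by
    rwa [Nat.card_perm, Nat.card_fin]
  let e : Γ ≃* Perm (Fin (g + 1)) := MulEquiv.ofBijective π hbij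
  refine ⟨((MonoidHom.fst _ _).comp Γ.subtype).comp e.symm.toMonoidHom, fun i ↦ ?_⟩
  have he : e.symm (swap i.castSucc i.succ) = x i := e.symm_apply_eq.2 (hπx i).symm
  exact congrArg (fun y : Γ ↦ (y : G × Perm (Fin (g + 1))).1) he

end Coxeter

section SmallIndex

open scoped Nat Pointwise commutatorElement

variable {α : Type*}

section Blocks

variable [Finite α]

theorem ncard_mul_ncard_orbit_le {G : Type*} [Group G] [MulAction G α] {B : Set α}
    (hB : IsBlock G B) : B.ncard * (orbit G B).ncard ≤ Nat.card α := by
  choose g hg using fun C : orbit G B ↦ C.2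
  dsimp only at hg
  have inj : Function.Injective fun p : B × orbit G B ↦ g p.2 • (p.1 : α) := by
    rintro ⟨⟨a, ha⟩, C⟩ ⟨⟨b, hb⟩, D⟩ (hab : g C • a = g D • b)
    have hCD : g C • B = g D • B := hB.smul_eq_smul_of_nonempty
      ⟨g C • a, Set.smul_mem_smul_set ha, hab ▸ Set.smul_mem_smul_set hb⟩
    obtain rfl : C = D := Subtype.ext (by rw [← hg C, hCD, hg D])
    obtain rfl := smul_left_cancel (g C) hab
    rfl
  rw [← Nat.card_coe_set_eq, ← Nat.card_coe_set_eq, ← Nat.card_prod]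
  exact Nat.card_le_card_of_injective _ inj

theorem index_stabilizer_set (B : Set α) :
    (stabilizer (Perm α) B).index = (Nat.card α).choose B.ncard := by
  classical
  let s : Set.powersetCard α B.ncard := ⟨B.toFinite.toFinset, by
    rw [Set.powersetCard.mem_iff, ← Set.ncard_eq_toFinset_card B]⟩
  have hsB : (s : Set α) = B := B.toFinite.coe_toFinset
  have hs : stabilizer (Perm α) s = stabilizer (Perm α) B := by
    rw [Set.powersetCard.stabilizer_coe, hsB]
  have := Set.powersetCard.isPretransitive (α := α) (n := B.ncard)
  rw [← hs, index_stabilizer_of_transitive, Set.powersetCard.card]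

theorem choose_ncard_mul_ncard_le {H : Subgroup (Perm α)} {B : Set α} (hB : IsBlock H B) :
    (Nat.card α).choose B.ncard * B.ncard ≤ H.index * Nat.card α := by
  let K := stabilizer (Perm α) B
  have hrel : K.relIndex H = (orbit H B).ncard := index_stabilizer H B
  have hdvd : K.index ∣ (K ⊓ H).index := Subgroup.index_dvd_of_le inf_le_left
  calc (Nat.card α).choose B.ncard * B.ncard
    _ = K.index * B.ncard := by rw [index_stabilizer_set]
    _ ≤ (K ⊓ H).index * B.ncard :=
      Nat.mul_le_mul_right _ <| Nat.le_of_dvd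
        (Nat.pos_of_ne_zero (K ⊓ H).index_ne_zero_of_finite) hdvd
    _ = H.index * (B.ncard * (orbit H B).ncard) := by
      rw [← Subgroup.relIndex_mul_index (inf_le_right : K ⊓ H ≤ H), Subgroup.inf_relIndex_right,
        hrel]
      ring
    _ ≤ H.index * Nat.card α := Nat.mul_le_mul_left _ (ncard_mul_ncard_orbit_le hB)

theorem two_mul_succ_le_choose {m j : ℕ} (hm : 6 ≤ m) (hj : 2 ≤ j) (hjm : j + 2 ≤ m) :
    2 * (m + 1) ≤ m.choose j := by
  induction m, hm using Nat.le_induction generalizing j with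
  | base => obtain rfl | rfl | rfl : j = 2 ∨ j = 3 ∨ j = 4 := by lia
            all_goals decide
  | succ m hm ih =>
    obtain ⟨i, rfl⟩ : ∃ i, j = i + 1 := ⟨j - 1, by lia⟩
    rw [Nat.choose_succ_succ]
    obtain rfl | hi := Nat.lt_or_eq_of_le (show 1 ≤ i by lia) |>.symm
    · have := ih le_rfl (by lia)
      rw [Nat.choose_one_right]
      lia
    · have := ih hi (by lia)
      obtain hi' | hi' : i + 1 + 2 ≤ m ∨ m = i + 2 := by lia
      · have := ih (j := i + 1) (by lia) hi'
        lia
      · have : m.choose (i + 1) = m := by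
          rw [hi', ← Nat.succ_eq_add_one (i + 1), Nat.choose_succ_self_right]
        lia

theorem card_le_ncard_add_one_of_isBlock {H : Subgroup (Perm α)} {B : Set α} (hα : 7 ≤ Nat.card α)
    (hH : H.index < 2 * Nat.card α) (hB : IsBlock H B) (hB3 : 3 ≤ B.ncard) :
    Nat.card α ≤ B.ncard + 1 := by
  by_contra! hlt
  have hle := choose_ncard_mul_ncard_le hB
  obtain ⟨n, hn⟩ : ∃ n, Nat.card α = n + 1 := ⟨Nat.card α - 1, by lia⟩
  obtain ⟨b, hb⟩ : ∃ b, B.ncard = b + 1 := ⟨B.ncard - 1, by lia⟩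
  rw [hn, hb, ← Nat.add_one_mul_choose_eq, mul_comm] at hle
  have := Nat.le_of_mul_le_mul_right hle n.succ_pos
  have := two_mul_succ_le_choose (m := n) (j := b) (by lia) (by lia) (by lia)
  lia

end Blocks

section ThreeCycles

variable [Fintype α] [DecidableEq α]

theorem isThreeCycle_commutator_of_support_inter_eq_singleton {g h : Perm α} {a : α}
    (hgh : g.support ∩ h.support = {a}) : IsThreeCycle ⁅g, h⁆ := by
  have mem_iff : ∀ x, (g x ≠ x ∧ h x ≠ x) ↔ x = a := fun x ↦ by
    rw [← mem_support, ← mem_support, ← Finset.mem_inter, hgh, Finset.mem_singleton]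
  obtain ⟨hga, hha⟩ := (mem_iff a).2 rfl
  have h_fix : ∀ x, g x ≠ x → x ≠ a → h x = x := by grind
  have g_fix : ∀ x, h x ≠ x → x ≠ a → g x = x := by grind
  have hhga : h (g a) = g a := h_fix _ (by simpa using hga) hga
  have hgha : g (h a) = h a := g_fix _ (by simpa using hha) hha
  have hne : h a ≠ g a := fun e ↦ hga (g.injective (e ▸ hgha))
  suffices ⁅g, h⁆ = swap a (h a) * swap a (g a) from
    this ▸ isThreeCycle_swap_mul_swap_same hha.symm hga.symm hne
  rw [commutatorElement_def, mul_inv_eq_iff_eq_mul, mul_inv_eq_iff_eq_mul]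
  ext x
  simp only [Perm.mul_apply, swap_apply_def]
  have := g.injective.eq_iff (a := x) (b := a)
  have := h.injective.eq_iff (a := x) (b := a)
  have := g.injective.eq_iff (a := g x) (b := x)
  have := h.injective.eq_iff (a := h x) (b := x)
  grind

theorem factorial_card_le_index {H : Subgroup (Perm α)} {s : Finset α}
    (hs : ∀ g ∈ H, g.support ⊆ s → g = 1) : s.card ! ≤ H.index := by
  have inj : Function.Injective fun g : Perm s ↦ (ofSubtype g : Perm α ⧸ H) := fun g h hgh ↦ by
    have hsupp : ∀ k : Perm s, (ofSubtype k : Perm α).support ⊆ s := fun k x hx ↦ by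
      by_contra hxs
      exact mem_support.1 hx (ofSubtype_apply_of_not_mem k hxs)
    rw [QuotientGroup.eq, ← map_inv, ← map_mul] at hgh
    exact inv_mul_eq_one.1 (ofSubtype_injective (by rw [hs _ hgh (hsupp _), map_one]))
  rw [Subgroup.index_eq_card, ← Fintype.card_coe, ← Nat.card_eq_fintype_card, ← Nat.card_perm]
  exact Nat.card_le_card_of_injective _ inj

/- Bochert's argument: let `s` be maximal among the sets supporting no nontrivial element of `H`.
Then the complement of `s` supports some `h ≠ 1` in `H`, and `insert a s` supports some `g ≠ 1` in
`H` for each `a ∈ h.support`. The supports of `g` and `h` meet in `a` only. -/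
theorem exists_isThreeCycle_mem_of_index_lt_factorial {H : Subgroup (Perm α)} {m : ℕ}
    (hm : 2 * m ≤ Nat.card α + 1) (hH : H.index < m !) : ∃ g ∈ H, IsThreeCycle g := by
  have exists_of_le : ∀ s : Finset α, m ≤ s.card → ∃ g ∈ H, g.support ⊆ s ∧ g ≠ 1 := by
    intro s hs
    by_contra! hno
    exact (hH.trans_le ((Nat.factorial_le hs).trans (factorial_card_le_index hno))).false
  obtain ⟨s, hs, hmax⟩ :=
    (Set.toFinite {s : Finset α | ∀ g ∈ H, g.support ⊆ s → g = 1}).exists_maximal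
      ⟨∅, fun g _ hg ↦ support_eq_empty_iff.1 (Finset.subset_empty.1 hg)⟩
  have hsm : s.card < m := by
    by_contra! hle
    obtain ⟨g, hg, hgs, hg1⟩ := exists_of_le s hle
    exact hg1 (hs g hg hgs)
  have hmc : m ≤ sᶜ.card := by
    rw [Finset.card_compl, ← Nat.card_eq_fintype_card]
    lia
  obtain ⟨h, hhH, hhs, hh1⟩ := exists_of_le sᶜ hmc
  obtain ⟨a, ha⟩ := Finset.nonempty_iff_ne_empty.2 (support_eq_empty_iff.not.2 hh1)
  have has : a ∉ s := Finset.mem_compl.1 (hhs ha)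
  obtain ⟨g, hgH, hgs, hg1⟩ : ∃ g ∈ H, g.support ⊆ insert a s ∧ g ≠ 1 := by
    by_contra! hno
    exact has (hmax hno (Finset.subset_insert a s) (Finset.mem_insert_self a s))
  have hag : a ∈ g.support := by
    by_contra ha'
    exact hg1 (hs g hgH ((Finset.subset_insert_iff_of_notMem ha').1 hgs))
  refine ⟨⁅g, h⁆, H.mul_mem (H.mul_mem (H.mul_mem hgH hhH) (H.inv_mem hgH)) (H.inv_mem hhH),
    isThreeCycle_commutator_of_support_inter_eq_singleton (a := a) ?_⟩
  refine Finset.eq_singleton_iff_unique_mem.2 ⟨Finset.mem_inter.2 ⟨hag, ha⟩, fun x hx ↦ ?_⟩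
  rw [Finset.mem_inter] at hx
  exact (Finset.mem_insert.1 (hgs hx.1)).resolve_right (Finset.mem_compl.1 (hhs hx.2))

/-- The subgroup of a permutation group generated by its 3-cycles. -/
def threeCycleSubgroup (H : Subgroup (Perm α)) : Subgroup H :=
  Subgroup.closure {g : H | IsThreeCycle (g : Perm α)}

instance threeCycleSubgroup_normal (H : Subgroup (Perm α)) : (threeCycleSubgroup H).Normal := by
  rw [← Subgroup.normalizer_eq_top_iff, eq_top_iff]
  refine le_trans (fun h _ ↦ ?_)
    (Subgroup.normalizer_le_normalizer_closure {g : H | IsThreeCycle (g : Perm α)})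
  refine Subgroup.mem_set_normalizer_iff.2 fun g ↦ ?_
  simp only [Set.mem_ofPred_eq, IsThreeCycle, Subgroup.coe_mul, InvMemClass.coe_inv, cycleType_conj]

theorem smul_eq_of_isBlock_of_isThreeCycle {H : Subgroup (Perm α)} {B : Set α} (hB : IsBlock H B)
    (hB' : B.Nontrivial) {g : H} (hg : IsThreeCycle (g : Perm α)) : g • B = B := by
  by_contra hne
  have hdisj : _root_.Disjoint (g • B) B :=
    (isBlock_iff_smul_eq_or_disjoint.1 hB g).resolve_left hne
  have hmove : ∀ b ∈ B, (g : Perm α) b ∉ B := fun b hb ↦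
    Set.disjoint_left.1 hdisj (Set.smul_mem_smul_set hb)
  have mem_supp : ∀ b ∈ B, b ∈ (g : Perm α).support := fun b hb ↦
    mem_support.2 fun h ↦ hmove b hb (by rwa [h])
  obtain ⟨a, ha, b, hb, hab⟩ := hB'
  have hcube : (g : Perm α) ^ 3 = 1 := hg.orderOf ▸ pow_orderOf_eq_one _
  have hb_mem := hg.support_eq_iff_mem_support.2 (mem_supp a ha) ▸ mem_supp b hb
  simp only [Finset.mem_insert, Finset.mem_singleton] at hb_mem
  obtain rfl | rfl | rfl := hb_mem
  · exact hab rfl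
  · exact hmove a ha hb
  · exact hmove _ hb (by rwa [show (g : Perm α) ((g : Perm α) ((g : Perm α) a)) = a from
      DFunLike.congr_fun hcube a])

theorem isPreprimitive_of_isPretransitive_threeCycleSubgroup {H : Subgroup (Perm α)}
    [IsPretransitive (threeCycleSubgroup H) α] : IsPreprimitive H α where
  exists_smul_eq a b := by
    obtain ⟨g, hg⟩ := exists_smul_eq (threeCycleSubgroup H) a b
    exact ⟨g, hg⟩
  isTrivialBlock_of_isBlock {B} hB := by
    refine or_iff_not_imp_left.2 fun hB' ↦ ?_
    rw [Set.not_subsingleton_iff] at hB'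
    have hstab : threeCycleSubgroup H ≤ stabilizer H B :=
      (Subgroup.closure_le _).2 fun g hg ↦ smul_eq_of_isBlock_of_isThreeCycle hB hB' hg
    obtain ⟨b, hb⟩ := hB'.nonempty
    refine Set.eq_univ_of_forall fun x ↦ ?_
    obtain ⟨g, rfl⟩ := exists_smul_eq (threeCycleSubgroup H) b x
    rw [← show (g : H) • B = B from hstab g.2]
    exact Set.smul_mem_smul_set hb

theorem three_le_ncard_orbit_threeCycleSubgroup {H : Subgroup (Perm α)} {g : Perm α} (hgH : g ∈ H)
    (hg : IsThreeCycle g) {a : α} (ha : a ∈ g.support) :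
    3 ≤ (orbit (threeCycleSubgroup H) a).ncard := by
  let k : threeCycleSubgroup H := ⟨⟨g, hgH⟩, Subgroup.subset_closure hg⟩
  have hsub : (g.support : Set α) ⊆ orbit (threeCycleSubgroup H) a := by
    rw [hg.support_eq_iff_mem_support.2 ha]
    simp only [Finset.coe_insert, Finset.coe_singleton, Set.insert_subset_iff,
      Set.singleton_subset_iff]
    exact ⟨mem_orbit_self a, mem_orbit a k, mem_orbit a (k * k)⟩
  rw [← card_support_eq_three_iff.2 hg, ← Set.ncard_coe_finset]
  exact Set.ncard_le_ncard hsub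

theorem four_mul_le_factorial {m : ℕ} (hm : 4 ≤ m) : 4 * m ≤ m ! := by
  obtain ⟨j, rfl⟩ : ∃ j, m = j + 1 := ⟨m - 1, by lia⟩
  rw [Nat.factorial_succ, mul_comm]
  exact Nat.mul_le_mul_left _ ((by decide : 4 ≤ 3 !).trans (Nat.factorial_le (by lia)))

theorem alternatingGroup_le_or_exists_le_stabilizer_of_index_lt {H : Subgroup (Perm α)}
    (hα : 7 ≤ Nat.card α) (hH : H.index < 2 * Nat.card α) :
    alternatingGroup α ≤ H ∨ ∃ a : α, H ≤ stabilizer (Perm α) a := by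
  obtain ⟨g, hgH, hg⟩ : ∃ g ∈ H, IsThreeCycle g := by
    have := four_mul_le_factorial (m := (Nat.card α + 1) / 2) (by lia)
    exact exists_isThreeCycle_mem_of_index_lt_factorial (m := (Nat.card α + 1) / 2) (by lia)
      (by lia)
  obtain ⟨a, ha⟩ : g.support.Nonempty :=
    Finset.card_pos.1 (by rw [card_support_eq_three_iff.2 hg]; norm_num)
  let A := orbit (threeCycleSubgroup H) a
  have hA : IsBlock H A := IsBlock.orbit_of_normal a
  have hcard : Nat.card α ≤ A.ncard + 1 :=
    card_le_ncard_add_one_of_isBlock hα hH hA (three_le_ncard_orbit_threeCycleSubgroup hgH hg ha)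
  by_cases hAuniv : A = Set.univ
  · have : IsPretransitive (threeCycleSubgroup H) α :=
      (isPretransitive_iff_orbit_eq_univ a).2 hAuniv
    exact .inl (alternatingGroup_le_of_isPreprimitive_of_isThreeCycle_mem
      isPreprimitive_of_isPretransitive_threeCycleSubgroup hg hgH)
  · obtain ⟨e, he⟩ := (Set.ne_univ_iff_exists_notMem A).1 hAuniv
    have hAe : A = {e}ᶜ := by
      refine Set.eq_of_subset_of_ncard_le (Set.subset_compl_singleton_iff.2 he) ?_
      rw [Set.ncard_compl, Set.ncard_singleton]
      lia
    refine .inr ⟨e, fun h hh ↦ ?_⟩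
    have hhA : h • A = A := by
      refine (isBlock_iff_smul_eq_or_disjoint.1 hA ⟨h, hh⟩).resolve_right fun hdisj ↦ ?_
      have := Set.ncard_union_eq hdisj
      have := Set.ncard_le_card ((⟨h, hh⟩ : H) • A ∪ A)
      rw [Set.ncard_smul_set] at *
      lia
    rw [hAe, Set.smul_set_compl, compl_inj_iff, Set.smul_set_singleton] at hhA
    exact Set.singleton_injective hhA

end ThreeCycles

theorem card_le_two_or_dvd_of_isPretransitive_perm {X : Type*} [Finite α] [Nonempty X]
    [MulAction (Perm α) X] [IsPretransitive (Perm α) X] (hα : 7 ≤ Nat.card α)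
    (hX : Nat.card X < 2 * Nat.card α) : Nat.card X ≤ 2 ∨ Nat.card α ∣ Nat.card X := by
  classical
  have := Fintype.ofFinite α
  have : Nontrivial α := Finite.one_lt_card_iff_nontrivial.1 (by lia)
  let x : X := Classical.arbitrary X
  have hx : (stabilizer (Perm α) x).index = Nat.card X := index_stabilizer_of_transitive _ x
  rw [← hx] at hX ⊢
  refine (alternatingGroup_le_or_exists_le_stabilizer_of_index_lt hα hX).imp (fun hle ↦ ?_) ?_
  · have := Subgroup.index_dvd_of_le hle
    rw [alternatingGroup.index_eq_two] at this
    exact Nat.le_of_dvd two_pos this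
  · rintro ⟨a, ha⟩
    rw [← index_stabilizer_of_transitive (Perm α) a]
    exact Subgroup.index_dvd_of_le ha

end SmallIndex

section FixedPoints

variable {X : Type*} [DecidableEq X] {g : ℕ}

theorem card_support_le_two_mul_of_braid [Fintype X] {p q : Perm X} (h : p * q * p = q * p * q) :
    p.support.card ≤ 2 * (p.support ∩ q.support).card := by
  have hmaps : (p.support \ q.support).card ≤ (p.support ∩ q.support).card := by
    refine Finset.card_le_card_of_injOn p (fun x hx ↦ ?_) p.injective.injOn
    rw [Finset.mem_coe, Finset.mem_sdiff, notMem_support] at hx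
    obtain ⟨hpx, hqx⟩ := hx
    rw [Finset.mem_coe, Finset.mem_inter, apply_mem_support, mem_support (f := q)]
    refine ⟨hpx, fun hqpx ↦ mem_support.1 hpx (p.injective ?_)⟩
    calc p (p x) = (p * q * p) x := by rw [Perm.mul_apply, Perm.mul_apply, hqpx]
      _ = p x := by rw [h, Perm.mul_apply, Perm.mul_apply, hqx, hqpx]
  have := Finset.card_sdiff_add_card_inter p.support q.support
  lia

variable {T : ℕ → Finset X} {d : ℕ}

theorem two_mul_card_inter_succ_eq (hg : 3 ≤ g) (hT : ∀ i < g, (T i).card = d)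
    (hdisj : ∀ i j, i + 2 ≤ j → j < g → _root_.Disjoint (T i) (T j))
    (hinter : ∀ i, i + 1 < g → d ≤ 2 * (T i ∩ T (i + 1)).card) {i : ℕ} (hi : i + 1 < g) :
    2 * (T i ∩ T (i + 1)).card = d := by
  have add_le : ∀ j, j + 2 < g →
      (T j ∩ T (j + 1)).card + (T (j + 1) ∩ T (j + 2)).card ≤ d := fun j hj ↦ by
    rw [← hT (j + 1) (by lia), ← Finset.card_union_of_disjoint
      (Finset.disjoint_of_subset_left Finset.inter_subset_left
        (Finset.disjoint_of_subset_right Finset.inter_subset_right (hdisj j (j + 2) le_rfl hj)))]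
    exact Finset.card_le_card (Finset.union_subset Finset.inter_subset_right
      Finset.inter_subset_left)
  obtain hi' | hi' : i + 2 < g ∨ 1 ≤ i := by lia
  · have := hinter i hi
    have := hinter (i + 1) hi'
    have := add_le i hi'
    lia
  · obtain ⟨j, rfl⟩ : ∃ j, i = j + 1 := ⟨i - 1, by lia⟩
    have := hinter j (by lia)
    have := hinter (j + 1) hi
    have := add_le j hi
    lia

theorem two_mul_card_biUnion_range (hg : 3 ≤ g) (hT : ∀ i < g, (T i).card = d)
    (hdisj : ∀ i j, i + 2 ≤ j → j < g → _root_.Disjoint (T i) (T j))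
    (hinter : ∀ i, i + 1 < g → d ≤ 2 * (T i ∩ T (i + 1)).card) {m : ℕ} (hm : m < g) :
    2 * ((Finset.range (m + 1)).biUnion T).card = (m + 2) * d := by
  induction m with
  | zero => rw [zero_add, Finset.range_one, Finset.singleton_biUnion, hT 0 hm]
  | succ m ih =>
    have hlast : T (m + 1) ∩ (Finset.range (m + 1)).biUnion T = T m ∩ T (m + 1) := by
      rw [Finset.range_add_one, Finset.biUnion_insert, Finset.inter_union_distrib_left,
        Finset.inter_comm (T m), Finset.union_eq_left, Finset.inter_biUnion]
      refine Finset.biUnion_subset.2 fun i hi ↦ ?_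
      rw [Finset.inter_comm, Finset.disjoint_iff_inter_eq_empty.1
        (hdisj i (m + 1) (by have := Finset.mem_range.1 hi; lia) hm)]
      exact Finset.empty_subset _
    have hunion := Finset.card_union_add_card_inter (T (m + 1)) ((Finset.range (m + 1)).biUnion T)
    rw [hlast, ← Finset.biUnion_insert, ← Finset.range_add_one, hT _ hm] at hunion
    have := two_mul_card_inter_succ_eq hg hT hdisj hinter hm
    have := ih (by lia)
    linarith

theorem succ_dvd_card_biUnion_range (hg : 3 ≤ g) (hT : ∀ i < g, (T i).card = d)
    (hdisj : ∀ i j, i + 2 ≤ j → j < g → _root_.Disjoint (T i) (T j))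
    (hinter : ∀ i, i + 1 < g → d ≤ 2 * (T i ∩ T (i + 1)).card) :
    g + 1 ∣ ((Finset.range g).biUnion T).card := by
  obtain ⟨m, rfl⟩ : ∃ m, g = m + 1 := ⟨g - 1, by lia⟩
  have := two_mul_card_biUnion_range hg hT hdisj hinter m.lt_succ_self
  rw [← two_mul_card_inter_succ_eq hg hT hdisj hinter (i := 0) (by lia), mul_left_comm] at this
  exact ⟨_, Nat.eq_of_mul_eq_mul_left two_pos this⟩

variable [Fintype X] {s : ℕ → Perm X}

theorem IsTransitiveBelow.biUnion_support_eq_univ [Nontrivial X] (ht : IsTransitiveBelow g s) :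
    (Finset.range g).biUnion (fun i ↦ (s i).support) = Finset.univ := by
  refine Finset.eq_univ_of_forall fun x ↦ ?_
  by_contra hx
  have hfix : ∀ i < g, s i x = x := fun i hi ↦ by
    by_contra hne
    exact hx (Finset.mem_biUnion.2 ⟨i, Finset.mem_range.2 hi, mem_support.2 hne⟩)
  obtain ⟨y, hy⟩ := exists_ne x
  refine hy (Set.mem_singleton_iff.1 ?_)
  rw [ht {x} (Set.singleton_nonempty x) fun i hi ↦ Set.mapsTo_singleton.2 (hfix i hi)]
  exact Set.mem_univ y

end FixedPoints

section TwoCycles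

variable {X : Type*} {g : ℕ} {s : ℕ → Perm X}

theorem two_dvd_ncard_of_forall_minimalPeriod_eq_two {p : Perm X} {Z : Set X}
    (hmaps : Set.MapsTo p Z Z) (hZ : Z ⊆ periodSet p {2}) : 2 ∣ Z.ncard := by
  obtain hfin | hinf := Z.finite_or_infinite
  · rw [Set.ncard_eq_toFinset_card Z hfin, ← ZMod.natCast_eq_zero_iff, Finset.card_eq_sum_ones,
      Nat.cast_sum]
    refine Finset.sum_involution (fun x _ ↦ p x) (fun _ _ ↦ by decide) (fun x hx _ hpx ↦ ?_)
      (fun x hx ↦ ?_) fun x hx ↦ ?_ <;> rw [hfin.mem_toFinset] at *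
    · have h1 : Function.minimalPeriod p x = 1 := Function.minimalPeriod_eq_one_iff_isFixedPt.2 hpx
      have h2 : Function.minimalPeriod p x = 2 := hZ hx
      lia
    · exact hmaps hx
    · have h2 : Function.minimalPeriod p x = 2 := hZ hx
      have := Function.iterate_minimalPeriod (f := p) (x := x)
      rwa [h2] at this
  · rw [hinf.ncard]
    exact dvd_zero 2

theorem IsTransitiveBelow.exists_apply_eq {G : Type*} [Group G] (ht : IsTransitiveBelow g s)
    (f : G →* Perm X) (hf : ∀ i < g, s i ∈ f.range) (x y : X) : ∃ a, f a x = y := by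
  have horbit : Set.range (fun a ↦ f a x) = Set.univ := by
    refine ht _ ⟨f 1 x, 1, rfl⟩ fun i hi ↦ ?_
    obtain ⟨b, hb⟩ := hf i hi
    rintro _ ⟨a, rfl⟩
    exact ⟨b * a, by simp only [map_mul, hb, Perm.mul_apply]⟩
  exact horbit.ge (Set.mem_univ y)

theorem IsBraidFamily.card_le_two_or_dvd_of_mul_self_eq_one [Nonempty X] (hs : IsBraidFamily g s)
    (ht : IsTransitiveBelow g s) (hg : 6 ≤ g) (hX : Nat.card X ≤ 2 * g + 1)
    (hsq : ∀ i < g, s i * s i = 1) : Nat.card X ≤ 2 ∨ g + 1 ∣ Nat.card X := by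
  obtain ⟨ρ, hρ⟩ := hs.exists_monoidHom_perm hsq
  let := MulAction.compHom X ρ
  have : IsPretransitive (Perm (Fin (g + 1))) X :=
    ⟨ht.exists_apply_eq ρ fun i hi ↦ ⟨_, hρ ⟨i, hi⟩⟩⟩
  have := card_le_two_or_dvd_of_isPretransitive_perm (α := Fin (g + 1)) (X := X)
  rw [Nat.card_fin] at this
  exact this (by lia) (by lia)

end TwoCycles

section Main

variable {X : Type*} [Finite X] {g : ℕ} {s : ℕ → Perm X}

theorem IsBraidFamily.constantBelow_or_dvd_of_le_ncard_fixed [Nontrivial X]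
    (hs : IsBraidFamily g s) (ht : IsTransitiveBelow g s) (hg : 6 ≤ g)
    (hX : Nat.card X ≤ 2 * g + 1) (hfix : g - 1 ≤ (periodSet (s 0) {1}).ncard) :
    ConstantBelow g s ∨ g + 1 ∣ Nat.card X := by
  classical
  have := Fintype.ofFinite X
  have hcard : (periodSet (s 0) {1}ᶜ).ncard < 2 * (g - 1) := by
    have : (periodSet (s 0) {1}).ncard + (periodSet (s 0) {1}ᶜ).ncard = Nat.card X :=
      Set.ncard_add_ncard_compl _
    lia
  refine (hs.constantBelow_or_disjoint_periodSet ht hg (fun m (hm : m ≠ 1) hm0 ↦ by lia)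
    hcard).imp_right fun hdisj ↦ ?_
  rw [Nat.card_eq_fintype_card, ← Finset.card_univ, ← ht.biUnion_support_eq_univ]
  refine succ_dvd_card_biUnion_range (by lia) (fun i hi ↦ hs.card_support_eq hi)
    (fun i j hij hj ↦ ?_) fun i hi ↦ ?_
  · rw [← Finset.disjoint_coe, coe_support_eq_periodSet, coe_support_eq_periodSet]
    exact hdisj i j hij hj
  · rw [← hs.card_support_eq (by lia : i < g)]
    exact card_support_le_two_mul_of_braid (hs.braid hi)

theorem IsBraidFamily.constantBelow_or_mul_self_eq_one (hs : IsBraidFamily g s)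
    (ht : IsTransitiveBelow g s) (hg : 6 ≤ g) (hX : Nat.card X ≤ 2 * g + 1)
    (htwo : 2 * (g - 1) ≤ (periodSet (s 0) {2}).ncard) :
    ConstantBelow g s ∨ ∀ i < g, s i * s i = 1 := by
  let U := periodSet (s 0) {2}ᶜ
  have hU : U.ncard ≤ 3 := by
    have : (periodSet (s 0) {2}).ncard + U.ncard = Nat.card X := Set.ncard_add_ncard_compl _
    lia
  refine (hs.constantBelow_or_disjoint_periodSet (c := 1) ht hg (fun m _ hm ↦ hm)
    (show U.ncard < 1 * (g - 1) by lia)).imp_right fun hdisj ↦ ?_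
  suffices h0 : s 0 * s 0 = 1 from fun i hi ↦ by
    obtain ⟨a, ha⟩ := hs.isConj hi
    have := ha.mul_right ha
    rwa [h0, SemiconjBy, mul_one, eq_comm, mul_eq_right] at this
  have heven : 2 ∣ U.ncard := by
    have h02 : Commute (s 2) (s 0) := (hs.commute (by lia) (by lia)).symm
    refine two_dvd_ncard_of_forall_minimalPeriod_eq_two (p := s 2)
      (fun x ↦ (apply_mem_periodSet_iff h02).2) fun x hx ↦ ?_
    exact not_not.1 fun hx2 ↦ Set.disjoint_left.1 (hdisj 0 2 le_rfl (by lia)) hx hx2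
  by_contra hne
  obtain ⟨x, hx⟩ : ∃ x, s 0 (s 0 x) ≠ x := by
    by_contra! h
    exact hne (Equiv.ext h)
  have hx0 : s 0 x ≠ x := fun h ↦ hx (by rw [h, h])
  have hxU : x ∈ U := fun h2 ↦ hx <| by
    have h2 : Function.minimalPeriod (s 0) x = 2 := h2
    have := Function.iterate_minimalPeriod (f := s 0) (x := x)
    rwa [h2] at this
  have hmaps : ∀ y ∈ U, s 0 y ∈ U := fun y ↦ (apply_mem_periodSet_iff (Commute.refl _)).2
  have : 2 < U.ncard := (Set.two_lt_ncard_iff U.toFinite).2 ⟨x, s 0 x, s 0 (s 0 x), hxU,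
    hmaps _ hxU, hmaps _ (hmaps _ hxU), hx0.symm, hx.symm, fun h ↦ hx0 ((s 0).injective h).symm⟩
  lia

theorem IsBraidFamily.constantBelow_of_isTransitiveBelow (hs : IsBraidFamily g s)
    (ht : IsTransitiveBelow g s) (hg : 6 ≤ g) (hne : Nat.card X ≠ g + 1)
    (hX : Nat.card X ≤ 2 * g + 1) : ConstantBelow g s := by
  obtain hle | hlt : Nat.card X ≤ g ∨ g + 2 ≤ Nat.card X := by lia
  · exact (isRigid_of_four_le (by lia)).constantBelow hle hs
  have : Nontrivial X := Finite.one_lt_card_iff_nontrivial.1 (by lia)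
  have not_dvd : ¬ g + 1 ∣ Nat.card X := Nat.not_dvd_of_lt_of_lt_mul_succ (k := 1) (by lia) (by lia)
  obtain hconst | hfix | htwo := hs.constantBelow_or_le_ncard_periodSet hg hX
  · exact hconst
  · exact (hs.constantBelow_or_dvd_of_le_ncard_fixed ht hg hX hfix).resolve_right not_dvd
  · refine (hs.constantBelow_or_mul_self_eq_one ht hg hX htwo).resolve_right fun hsq ↦ ?_
    obtain hle | hdvd := hs.card_le_two_or_dvd_of_mul_self_eq_one ht hg hX hsq
    · lia
    · exact not_dvd hdvd

end Main

theorem commute_σ {n : ℕ} {i j : Fin (n - 1)} (hij : (i : ℕ) + 2 ≤ j) :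
    Commute (σ i) (σ j) :=
  PresentedGroup.mk_eq_mk_of_mul_inv_mem (.inl ⟨i, j, .inl hij, rfl⟩)

theorem braid_σ {n : ℕ} {i j : Fin (n - 1)} (hij : (j : ℕ) = i + 1) :
    σ i * σ j * σ i = σ j * σ i * σ j :=
  PresentedGroup.mk_eq_mk_of_mul_inv_mem (.inr ⟨i, j, hij, rfl⟩)

theorem exists_isBraidFamily_σ (n : ℕ) :
    ∃ t : ℕ → BraidGroup n, IsBraidFamily (n - 1) t ∧ ∀ i : Fin (n - 1), t i = σ i := by
  let t : ℕ → BraidGroup n := fun i ↦ if hi : i < n - 1 then σ ⟨i, hi⟩ else 1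
  have ht : ∀ i (hi : i < n - 1), t i = σ ⟨i, hi⟩ := fun i hi ↦ dif_pos hi
  refine ⟨t, ⟨fun {i j} hij hj ↦ ?_, fun {i} hi ↦ ?_⟩, fun i ↦ ht i i.2⟩
  · rw [ht i (by lia), ht j hj]
    exact commute_σ hij
  · rw [ht i (by lia), ht (i + 1) hi]
    exact braid_σ rfl

open scoped Pointwise in
theorem isTransitiveBelow_of_braidGroup_hom {X : Type*} [Finite X] {n : ℕ}
    {ψ : BraidGroup n →* Perm X} (hψ : ∀ x y, ∃ a, ψ a x = y) {t : ℕ → BraidGroup n}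
    (ht : ∀ i : Fin (n - 1), t i = σ i) : IsTransitiveBelow (n - 1) (fun i ↦ ψ (t i)) := by
  rintro Z ⟨z, hz⟩ hmaps
  have mem_stabilizer (a : BraidGroup n) : a ∈ (stabilizer (Perm X) Z).comap ψ := by
    refine PresentedGroup.generated_by _ _ (fun i ↦ ?_) a
    rw [Subgroup.mem_comap, mem_stabilizer_set_iff_smul_set_subset Z.toFinite]
    have hσ : Set.MapsTo (ψ (σ i)) Z Z := ht i ▸ hmaps i i.2
    exact hσ.image_subset
  refine Set.eq_univ_of_forall fun x ↦ ?_
  obtain ⟨a, rfl⟩ := hψ z x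
  exact (mem_stabilizer a : ψ a • Z = Z).le (Set.smul_mem_smul_set hz)

theorem transitive_hom_middle_is_cyclic_general {X : Type*} [Finite X] {n : ℕ} (hn : 7 ≤ n)
    (hne : Nat.card X ≠ n) (hX : Nat.card X ≤ 2 * n - 1) (ψ : BraidGroup n →* Perm X)
    (hψ : ∀ x y, ∃ a, ψ a x = y) : IsCyclicHom ψ := fun i j ↦ by
  obtain ⟨t, ht, htσ⟩ := exists_isBraidFamily_σ n
  have hconst := (ht.map ψ).constantBelow_of_isTransitiveBelow
    (isTransitiveBelow_of_braidGroup_hom hψ htσ) (by lia) (by lia) (by lia)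
  rw [← htσ i, ← htσ j]
  exact hconst i.2 j.2

end

/-- Lin. Let `n ≥ 7` and `n+1 ≤ k ≤ 2n-1`. Then every transitive
homomorphism `ψ : B_n → Sym_k` is cyclic. -/
theorem transitive_hom_middle_is_cyclic (n k : ℕ) (hn : 7 ≤ n)
    (hk1 : n + 1 ≤ k) (hk2 : k ≤ 2 * n - 1)
    (ψ : BraidGroup n →* Equiv.Perm (Fin k)) (hψ : IsTransitiveHom ψ) :
    IsCyclicHom ψ :=
  transitive_hom_middle_is_cyclic_general hn (by rw [Nat.card_fin]; lia)
    (by rwa [Nat.card_fin]) ψ hψ
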